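/- arXiv:1405.1575 — 3 statements merged into one kernel-verified Lean document; each statement's English description precedes it below -/
import Mathlib

section
/- Every nonzero matrix of V3(F2) has rank exactly 2 (in particular every matrix of V3(F2) is singular). -/
/-!
For a `3 × 3` matrix with zero diagonal, the determinant is the sum of the products of the two
triples `(M 0 1, M 1 2, M 2 0)` and `(M 2 1, M 1 0, M 0 2)`. Over `F2`, three elements with sum `0`
cannot all be `1`, so both products vanish and the rank is at most `2`.

Conversely, a nonzero entry `M i j` lies in one of the two triples, whose sum is `0`, so the triple
has a second nonzero entry `M j k` or `M k i`. The product of the two is a `2 × 2` minor, because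
the other term of that minor contains a diagonal entry; hence the rank is at least `2`.
-/

open Matrix

/-- `V3(F2)`: the `3 × 3` matrices over `F2` with zero diagonal satisfying
`M 0 1 + M 1 2 + M 2 0 = 0` and `M 2 1 + M 1 0 + M 0 2 = 0`. -/
def V3 : Submodule (ZMod 2) (Matrix (Fin 3) (Fin 3) (ZMod 2)) where
  carrier := {M | (∀ i : Fin 3, M i i = 0) ∧
    M 0 1 + M 1 2 + M 2 0 = 0 ∧ M 2 1 + M 1 0 + M 0 2 = 0}
  add_mem' := by
    rintro M N ⟨hM1, hM2, hM3⟩ ⟨hN1, hN2, hN3⟩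
    refine ⟨fun i => by simp [Matrix.add_apply, hM1 i, hN1 i], ?_, ?_⟩
    · simp only [Matrix.add_apply]
      linear_combination hM2 + hN2
    · simp only [Matrix.add_apply]
      linear_combination hM3 + hN3
  zero_mem' := by
    refine ⟨fun i => rfl, ?_, ?_⟩ <;> simp
  smul_mem' := by
    rintro c M ⟨hM1, hM2, hM3⟩
    refine ⟨fun i => by simp [Matrix.smul_apply, hM1 i], ?_, ?_⟩
    · simp only [Matrix.smul_apply, smul_eq_mul]
      linear_combination c * hM2
    · simp only [Matrix.smul_apply, smul_eq_mul]
      linear_combination c * hM3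

section Rank

variable {n R : Type*} [Fintype n] [CommRing R] [IsDomain R] {M : Matrix n n R}

lemma rank_lt_card_of_det_eq_zero [DecidableEq n] (hM : M.det = 0) : M.rank < Fintype.card n := by
  obtain ⟨v, hv, hMv⟩ := exists_mulVec_eq_zero_iff.mpr hM
  have hker_rank : 0 < Module.rank R M.mulVecLin.ker :=
    rank_pos_iff_exists_ne_zero.mpr ⟨⟨v, hMv⟩, Subtype.coe_ne_coe.mp hv⟩
  have hker : 0 < Module.finrank R M.mulVecLin.ker :=
    Cardinal.toNat_pos.mpr
      ⟨hker_rank.ne', (Submodule.rank_le _).trans_lt (Module.rank_lt_aleph0 ..)⟩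
  calc
    M.rank = Module.finrank R ((n → R) ⧸ M.mulVecLin.ker) :=
      M.mulVecLin.quotKerEquivRange.finrank_eq.symm
    _ < Module.finrank R ((n → R) ⧸ M.mulVecLin.ker) + Module.finrank R M.mulVecLin.ker :=
      Nat.lt_add_of_pos_right hker
    _ = Fintype.card n := by
      rw [Submodule.finrank_quotient_add_finrank, Module.finrank_fintype_fun_eq_card]

lemma card_le_rank_of_det_submatrix_ne_zero {m o : Type*} [Fintype o] [DecidableEq o]
    {A : Matrix m n R} {r : o → m} {c : o → n} (h : (A.submatrix r c).det ≠ 0) :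
    Fintype.card o ≤ A.rank :=
  (rank_of_det_ne_zero h).symm.trans_le (A.rank_submatrix_le r c)

lemma two_le_rank_of_diag_eq_zero_of_ne_zero {i j k : n} (hj : M j j = 0)
    (hij : M i j ≠ 0) (hjk : M j k ≠ 0) : 2 ≤ M.rank := by
  have hminor : (M.submatrix ![i, j] ![j, k]).det = M i j * M j k := by
    rw [det_fin_two]
    simp [hj]
  exact card_le_rank_of_det_submatrix_ne_zero (hminor.trans_ne (mul_ne_zero hij hjk))

lemma two_le_rank_of_exists_add_add_eq_zero (hdiag : ∀ i, M i i = 0)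
    (hsum : ∀ i j, ∃ k, M i j + M j k + M k i = 0) (hM : M ≠ 0) : 2 ≤ M.rank := by
  obtain ⟨i, j, hij⟩ : ∃ i j, M i j ≠ 0 := by
    by_contra! h
    exact hM (Matrix.ext h)
  obtain ⟨k, hk⟩ := hsum i j
  by_cases hjk : M j k = 0
  · have hki : M k i ≠ 0 := fun hki => hij (by simpa [hjk, hki] using hk)
    exact two_le_rank_of_diag_eq_zero_of_ne_zero (hdiag i) hki hij
  · exact two_le_rank_of_diag_eq_zero_of_ne_zero (hdiag j) hij hjk

end Rank

section Det

variable {R : Type*} [CommRing R]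

lemma det_fin_three_of_diag_eq_zero {M : Matrix (Fin 3) (Fin 3) R} (hdiag : ∀ i, M i i = 0) :
    M.det = M 0 1 * M 1 2 * M 2 0 + M 2 1 * M 1 0 * M 0 2 := by
  rw [det_fin_three, hdiag 0, hdiag 1, hdiag 2]
  ring

lemma mul_mul_eq_zero_of_add_add_eq_zero [CharP R 2] {x y z : R} (hx : IsIdempotentElem x)
    (hy : IsIdempotentElem y) (h : x + y + z = 0) : x * y * z = 0 :=
  calc
    x * y * z = x * y * (x + y) := by rw [CharTwo.add_eq_zero.mp h]
    _ = x * x * y + x * (y * y) := by ring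
    _ = x * y + x * y := by rw [hx.eq, hy.eq]
    _ = 0 := CharTwo.add_self_eq_zero _

end Det

namespace V3

variable {M : Matrix (Fin 3) (Fin 3) (ZMod 2)}

lemma det_eq_zero (hM : M ∈ V3) : M.det = 0 := by
  obtain ⟨hdiag, ha, hb⟩ := hM
  have hidem (x : ZMod 2) : IsIdempotentElem x := by
    rw [IsIdempotentElem, ← sq, ZMod.pow_card]
  rw [det_fin_three_of_diag_eq_zero hdiag,
    mul_mul_eq_zero_of_add_add_eq_zero (hidem _) (hidem _) ha,
    mul_mul_eq_zero_of_add_add_eq_zero (hidem _) (hidem _) hb, add_zero]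

lemma exists_add_add_eq_zero (hM : M ∈ V3) (i j : Fin 3) : ∃ k, M i j + M j k + M k i = 0 := by
  obtain ⟨hdiag, ha, hb⟩ := hM
  match i, j with
  | 0, 0 => exact ⟨0, by simp only [hdiag, add_zero]⟩
  | 1, 1 => exact ⟨1, by simp only [hdiag, add_zero]⟩
  | 2, 2 => exact ⟨2, by simp only [hdiag, add_zero]⟩
  | 0, 1 => exact ⟨2, ha⟩
  | 1, 2 => exact ⟨0, by linear_combination ha⟩
  | 2, 0 => exact ⟨1, by linear_combination ha⟩
  | 2, 1 => exact ⟨0, hb⟩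
  | 1, 0 => exact ⟨2, by linear_combination hb⟩
  | 0, 2 => exact ⟨1, by linear_combination hb⟩

lemma two_le_rank (hM : M ∈ V3) (hM0 : M ≠ 0) : 2 ≤ M.rank :=
  two_le_rank_of_exists_add_add_eq_zero hM.1 (exists_add_add_eq_zero hM) hM0

end V3

theorem every_nonzero_matrix_of_V3_has_rank_two :
    (∀ M ∈ V3, M ≠ 0 → M.rank = 2) ∧ ∀ M ∈ V3, M.det = 0 := by
  refine ⟨fun M hM hM0 => le_antisymm ?_ (V3.two_le_rank hM hM0), fun M hM => V3.det_eq_zero hM⟩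
  exact Nat.lt_succ_iff.mp (rank_lt_card_of_det_eq_zero (V3.det_eq_zero hM))
end

section
/- A linear subspace V of J3(F2) is primitive with upper rank 2 if and only if for every pair (a,b) ∈ F2 × F2, V contains at least one matrix whose diagonal entries are (a, a+b, b), i.e., an upper-triangular matrix of the form [[a, ?, ?], [0, a+b, ?], [0, 0, b]]. -/
/-!
Over a field, call a space `V` of `n × n` matrices *injective on hyperplanes* if each hyperplane
`v⊥` meets the kernel of some `M ∈ V` trivially. This property is invariant under equivalence, and
on the hyperplane of vectors with vanishing last coordinate it produces a matrix that keeps rank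
`n - 1` after its last column is deleted. Hence `V` is primitive with upper rank `n - 1` as soon as
`V` and its transpose are injective on hyperplanes and all matrices of `V` are singular.

A space of upper-triangular matrices is injective on hyperplanes if for each `k` it contains some
`M` whose diagonal vanishes at most at `k`: given `v`, take `k` to be the first nonzero coordinate
of `v`. If `w` is nonzero with last nonzero coordinate `i`, then `(M *ᵥ w) i = M i i * w i`, which
is nonzero unless `i = k`, and in that case `v ⬝ᵥ w = v k * w k` is nonzero. In `J3` such
matrices are exactly what the diagonals `(0, 1, 1)`, `(1, 0, 1)` and `(1, 1, 0)` provide.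

Conversely, if the `k`-th diagonal entry vanishes on an upper-triangular `V`, then either `k` is
last and the last row is zero, or the leading `(n - 1) × (n - 1)` blocks are singular and deleting
the last column drops the rank below `n - 1`. So on a primitive `V` of upper rank `n - 1` no
diagonal entry vanishes identically. For `V ≤ J3` this says that the space of pairs
`(M 0 0, M 2 2)` lies in none of the three lines of `F₂²`, hence is all of `F₂²`.
-/

open Matrix

/-- Two linear subspaces of `n × p` matrices over `K` are *equivalent* when one is obtained
from the other by multiplying on the left and on the right by fixed invertible matrices. -/
def MatEquiv (K : Type*) [Field K] {n p : ℕ}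
    (V₁ V₂ : Submodule K (Matrix (Fin n) (Fin p) K)) : Prop :=
  ∃ (P : Matrix (Fin n) (Fin n) K) (Q : Matrix (Fin p) (Fin p) K),
    IsUnit P ∧ IsUnit Q ∧
      (V₂ : Set (Matrix (Fin n) (Fin p) K)) =
        (fun M => P * M * Q) '' (V₁ : Set (Matrix (Fin n) (Fin p) K))

/-- A linear subspace of matrices is *reduced* when no nonzero vector is annihilated by every
matrix of the space, and the column spaces of the matrices of the space together span the
whole target space. -/
def Reduced (K : Type*) [Field K] {n p : ℕ}
    (V : Submodule K (Matrix (Fin n) (Fin p) K)) : Prop :=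
  (∀ x : Fin p → K, (∀ M ∈ V, M.mulVec x = 0) → x = 0) ∧
  Submodule.span K {y : Fin n → K | ∃ M ∈ V, ∃ x : Fin p → K, M.mulVec x = y} = ⊤

/-- The *upper rank* of a linear subspace of matrices: the maximal rank of a matrix in it. -/
noncomputable def urk {K : Type*} [Field K] {n p : ℕ}
    (V : Submodule K (Matrix (Fin n) (Fin p) K)) : ℕ :=
  sSup (Matrix.rank '' (V : Set (Matrix (Fin n) (Fin p) K)))

/-- The matrix obtained by deleting the last column. -/
def dropCol {K : Type*} [Field K] {n p : ℕ} (M : Matrix (Fin n) (Fin p) K) :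
    Matrix (Fin n) (Fin (p - 1)) K :=
  M.submatrix id (Fin.castLE (Nat.sub_le p 1))

/-- The matrix obtained by deleting the last row. -/
def dropRow {K : Type*} [Field K] {n p : ℕ} (M : Matrix (Fin n) (Fin p) K) :
    Matrix (Fin (n - 1)) (Fin p) K :=
  M.submatrix (Fin.castLE (Nat.sub_le n 1)) id

/-- A linear subspace of matrices (of upper rank `r = urk V`) is *semi-primitive* when it is
reduced and it is not equivalent to a subspace `T` such that the space obtained by deleting
the last column of each matrix of `T` has upper rank at most `r - 1`. -/
def SemiPrimitive (K : Type*) [Field K] {n p : ℕ}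
    (V : Submodule K (Matrix (Fin n) (Fin p) K)) : Prop :=
  Reduced K V ∧
    ¬ ∃ T : Submodule K (Matrix (Fin n) (Fin p) K),
        MatEquiv K V T ∧ ∀ M ∈ T, (dropCol M).rank ≤ urk V - 1

/-- A linear subspace of matrices (of upper rank `r = urk V`) is *primitive* when it is
semi-primitive and it is not equivalent to a subspace `T` such that the space obtained by
deleting the last row of each matrix of `T` has upper rank at most `r - 1`. -/
def Primitive (K : Type*) [Field K] {n p : ℕ}
    (V : Submodule K (Matrix (Fin n) (Fin p) K)) : Prop :=
  SemiPrimitive K V ∧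
    ¬ ∃ T : Submodule K (Matrix (Fin n) (Fin p) K),
        MatEquiv K V T ∧ ∀ M ∈ T, (dropRow M).rank ≤ urk V - 1

/-- `J3(F2)`: the space of upper-triangular `3 × 3` matrices over `F2` with trace zero. -/
def J3 : Submodule (ZMod 2) (Matrix (Fin 3) (Fin 3) (ZMod 2)) where
  carrier := {M | M.trace = 0 ∧ ∀ i j : Fin 3, j < i → M i j = 0}
  add_mem' := by
    rintro M N ⟨hM1, hM2⟩ ⟨hN1, hN2⟩
    refine ⟨by simp [Matrix.trace_add, hM1, hN1], ?_⟩
    intro i j h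
    simp [Matrix.add_apply, hM2 i j h, hN2 i j h]
  zero_mem' := by
    refine ⟨by simp, ?_⟩
    intro i j h
    simp
  smul_mem' := by
    rintro c M ⟨hM1, hM2⟩
    refine ⟨by simp [Matrix.trace_smul, hM1], ?_⟩
    intro i j h
    simp [Matrix.smul_apply, hM2 i j h]

section LastCoordinate

variable {ι α R : Type*} [LinearOrder α]

lemma exists_ne_zero_and_forall_lt_eq_zero [Finite ι] [Zero R] (b : ι → α) {w : ι → R}
    (hw : w ≠ 0) : ∃ i, w i ≠ 0 ∧ ∀ j, b i < b j → w j = 0 := by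
  obtain ⟨i, hi⟩ :=
    (Set.toFinite {i | w i ≠ 0}).exists_maximalFor b _ (Function.ne_iff.1 hw)
  exact ⟨i, hi.prop, fun j hij => by_contra fun hj => hi.not_gt hj hij⟩

lemma dotProduct_eq_mul_of_forall_lt [Fintype ι] [NonUnitalNonAssocSemiring R] {b : ι → α}
    (hb : Function.Injective b) {u w : ι → R} {i : ι} (hu : ∀ j, b j < b i → u j = 0)
    (hw : ∀ j, b i < b j → w j = 0) : u ⬝ᵥ w = u i * w i := by
  refine Fintype.sum_eq_single i fun j hj => ?_
  rcases (hb.ne hj).lt_or_gt with hlt | hgt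
  · rw [hu j hlt, zero_mul]
  · rw [hw j hgt, mul_zero]

end LastCoordinate

section InjOnHyperplanes

variable {ι m n R : Type*}

/-- `V` is *injective on hyperplanes* when each hyperplane `{w | v ⬝ᵥ w = 0}` meets the kernel of
some matrix of `V` trivially. Together with the same property of the transposed space, this is the
criterion for primitivity of spaces of singular square matrices. -/
def InjOnHyperplanes [Fintype n] [CommSemiring R] (V : Submodule R (Matrix m n R)) : Prop :=
  ∀ v : n → R, v ≠ 0 → ∃ M ∈ V, ∀ w, v ⬝ᵥ w = 0 → M *ᵥ w = 0 → w = 0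

/-- The space of the transposes of the matrices of `V`, written as a preimage so that membership
of `M` unfolds to `Mᵀ ∈ V`. -/
def transposeSpace [CommSemiring R] (V : Submodule R (Matrix m n R)) :
    Submodule R (Matrix n m R) :=
  V.comap (transposeLinearEquiv n m R R).toLinearMap

lemma injOnHyperplanes_of_blockTriangular {α : Type*} [LinearOrder α] [Fintype ι] [CommSemiring R]
    [NoZeroDivisors R] {V : Submodule R (Matrix ι ι R)} {b : ι → α} (hb : Function.Injective b)
    (hV : ∀ M ∈ V, M.BlockTriangular b) (hdiag : ∀ k, ∃ M ∈ V, ∀ i ≠ k, M i i ≠ 0) :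
    InjOnHyperplanes V := by
  intro v hv
  obtain ⟨k, hvk, hk⟩ := exists_ne_zero_and_forall_lt_eq_zero (OrderDual.toDual ∘ b) hv
  obtain ⟨M, hM, hMk⟩ := hdiag k
  refine ⟨M, hM, fun w hvw hMw => by_contra fun hw => ?_⟩
  obtain ⟨i, hwi, hi⟩ := exists_ne_zero_and_forall_lt_eq_zero b hw
  by_cases hik : i = k
  · subst hik
    exact mul_ne_zero hvk hwi ((dotProduct_eq_mul_of_forall_lt hb hk hi).symm.trans hvw)
  · have hMwi : (M *ᵥ w) i = M i i * w i :=
      dotProduct_eq_mul_of_forall_lt hb (fun j hj => hV M hM hj) hi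
    exact mul_ne_zero (hMk i hik) hwi (hMwi.symm.trans (congrFun hMw i))

lemma InjOnHyperplanes.exists_mulVec_ne_zero [Fintype n] [Nontrivial n] [CommRing R] [Nontrivial R]
    {V : Submodule R (Matrix m n R)} (h : InjOnHyperplanes V) {x : n → R} (hx : x ≠ 0) :
    ∃ M ∈ V, M *ᵥ x ≠ 0 := by
  obtain ⟨v, hv, hvx⟩ := exists_ne_zero_dotProduct_eq_zero x
  obtain ⟨M, hM, hinj⟩ := h v hv
  exact ⟨M, hM, fun hMx => hx (hinj x hvx hMx)⟩

end InjOnHyperplanes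

section Rank

variable {m n ι K : Type*} [Field K]

lemma rank_eq_card_iff_forall_mulVec_eq_zero [Fintype n] (A : Matrix m n K) :
    A.rank = Fintype.card n ↔ ∀ u, A *ᵥ u = 0 → u = 0 := by
  have hsum := LinearMap.finrank_range_add_finrank_ker A.mulVecLin
  rw [Module.finrank_fintype_fun_eq_card] at hsum
  change A.rank + _ = _ at hsum
  rw [← hsum, left_eq_add, Submodule.finrank_eq_zero, LinearMap.ker_eq_bot']
  rfl

lemma rank_lt_card_of_mulVec_eq_zero [Fintype n] {A : Matrix m n K} {u : n → K} (hu : u ≠ 0)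
    (hAu : A *ᵥ u = 0) : A.rank < Fintype.card n :=
  A.rank_le_card_width.lt_of_ne fun h =>
    hu ((rank_eq_card_iff_forall_mulVec_eq_zero A).1 h u hAu)

lemma rank_lt_card_of_det_eq_zero_s4 [Fintype n] [DecidableEq n] {A : Matrix n n K}
    (hA : A.det = 0) : A.rank < Fintype.card n := by
  obtain ⟨u, hu, hAu⟩ := exists_mulVec_eq_zero_iff.2 hA
  exact rank_lt_card_of_mulVec_eq_zero hu hAu

lemma span_eq_top_of_forall_exists_dotProduct_ne_zero [Fintype ι] {s : Set (ι → K)}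
    (hs : ∀ v ≠ 0, ∃ y ∈ s, v ⬝ᵥ y ≠ 0) : Submodule.span K s = ⊤ := by
  classical
  by_contra hne
  obtain ⟨f, hf, hle⟩ := Submodule.exists_le_ker_of_lt_top _ (lt_top_iff_ne_top.2 hne)
  obtain ⟨v, rfl⟩ := (dotProductEquiv K ι).surjective f
  obtain ⟨y, hy, hvy⟩ := hs v fun hv => hf (by rw [hv, map_zero])
  exact hvy (hle (Submodule.subset_span hy))

end Rank

section DropLast

variable {K : Type*} [Field K] {n p : ℕ}

lemma dropCol_mulVec (M : Matrix (Fin n) (Fin (p + 1)) K) (u : Fin p → K) :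
    dropCol M *ᵥ u = M *ᵥ (Fin.snoc u 0 : Fin (p + 1) → K) := by
  ext i
  refine Eq.trans ?_ (Fin.sum_univ_castSucc _).symm
  simp only [Fin.snoc_castSucc, Fin.snoc_last, mul_zero, add_zero]
  rfl

lemma rank_dropRow (M : Matrix (Fin n) (Fin p) K) : (dropRow M).rank = (dropCol Mᵀ).rank :=
  (rank_transpose (dropRow M)).symm

lemma rank_dropCol_lt_of_diag_eq_zero {M : Matrix (Fin (n + 1)) (Fin (n + 1)) K}
    (hM : M.IsUpperTriangular) {k : Fin n} (hk : M k.castSucc k.castSucc = 0) :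
    (dropCol M).rank < n := by
  have hdet : (M.submatrix Fin.castSucc Fin.castSucc).det = 0 := by
    have hB : (M.submatrix Fin.castSucc Fin.castSucc).IsUpperTriangular := fun _ _ hij => hM hij
    rw [det_of_isUpperTriangular hB]
    exact Finset.prod_eq_zero (Finset.mem_univ k) hk
  obtain ⟨u, hu, hBu⟩ := exists_mulVec_eq_zero_iff.2 hdet
  have hlast : dropCol M (Fin.last n) = 0 := funext fun j => hM (Fin.castSucc_lt_last j)
  have hMu : dropCol M *ᵥ u = 0 := by
    ext i
    induction i using Fin.lastCases with
    | last => exact (congrArg (· ⬝ᵥ u) hlast).trans (zero_dotProduct u)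
    | cast i => exact congrFun hBu i
  simpa using rank_lt_card_of_mulVec_eq_zero hu hMu

end DropLast

section Primitivity

variable {K : Type*} [Field K] {n p : ℕ}

lemma MatEquiv.refl (V : Submodule K (Matrix (Fin n) (Fin p) K)) : MatEquiv K V V :=
  ⟨1, 1, isUnit_one, isUnit_one, by simp⟩

lemma MatEquiv.transpose {V T : Submodule K (Matrix (Fin n) (Fin p) K)} (h : MatEquiv K V T) :
    MatEquiv K (transposeSpace V) (transposeSpace T) := by
  obtain ⟨P, Q, hP, hQ, hT⟩ := h
  refine ⟨Qᵀ, Pᵀ, Q.isUnit_transpose.2 hQ, P.isUnit_transpose.2 hP, Set.ext fun N => ?_⟩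
  change Nᵀ ∈ (T : Set _) ↔ _
  rw [hT]
  constructor
  · rintro ⟨M, hM, hMN⟩
    refine ⟨Mᵀ, hM, ?_⟩
    rw [← transpose_transpose N, ← hMN]
    simp only [transpose_mul, Matrix.mul_assoc]
  · rintro ⟨M, hM, rfl⟩
    exact ⟨Mᵀ, hM, by simp [Matrix.mul_assoc]⟩

lemma InjOnHyperplanes.of_matEquiv {V T : Submodule K (Matrix (Fin n) (Fin p) K)}
    (h : InjOnHyperplanes V) (hVT : MatEquiv K V T) : InjOnHyperplanes T := by
  obtain ⟨P, Q, hP, hQ, hT⟩ := hVT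
  intro v hv
  obtain ⟨v, rfl⟩ := vecMul_surjective_iff_isUnit.2 hQ v
  obtain ⟨M, hM, hinj⟩ := h v (by rintro rfl; simp at hv)
  have hPMQ : P * M * Q ∈ (T : Set _) := hT ▸ ⟨M, hM, rfl⟩
  refine ⟨P * M * Q, hPMQ, fun w hvw hw => mulVec_injective_of_isUnit hQ ?_⟩
  rw [mulVec_zero]
  refine hinj (Q *ᵥ w) (by rwa [dotProduct_mulVec]) (mulVec_injective_of_isUnit hP ?_)
  rwa [mulVec_zero, mulVec_mulVec, mulVec_mulVec]

lemma InjOnHyperplanes.exists_rank_dropCol_eq {V : Submodule K (Matrix (Fin n) (Fin (p + 1)) K)}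
    (h : InjOnHyperplanes V) : ∃ M ∈ V, (dropCol M).rank = p := by
  obtain ⟨M, hM, hinj⟩ := h (Pi.single (Fin.last p) 1) (by simp)
  have hdrop : (dropCol M).rank = Fintype.card (Fin p) := by
    refine (rank_eq_card_iff_forall_mulVec_eq_zero (dropCol M)).2 fun u hu => ?_
    have hsnoc : (Fin.snoc u 0 : Fin (p + 1) → K) = 0 :=
      hinj _ (by simp) ((dropCol_mulVec M u).symm.trans hu)
    exact funext fun j => by simpa using congrFun hsnoc j.castSucc
  exact ⟨M, hM, by simpa using hdrop⟩

lemma InjOnHyperplanes.urk_eq {V : Submodule K (Matrix (Fin (n + 1)) (Fin (n + 1)) K)}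
    (h : InjOnHyperplanes V) (hdet : ∀ M ∈ V, M.det = 0) : urk V = n := by
  have hle : ∀ M ∈ V, M.rank ≤ n := fun M hM =>
    Nat.lt_succ_iff.1 (by simpa using rank_lt_card_of_det_eq_zero_s4 (hdet M hM))
  obtain ⟨M, hM, hrank⟩ := h.exists_rank_dropCol_eq
  refine IsGreatest.csSup_eq ⟨⟨M, hM, (hle M hM).antisymm ?_⟩, Set.forall_mem_image.2 hle⟩
  exact hrank.symm.trans_le (rank_submatrix_le M id _)

lemma InjOnHyperplanes.reduced [Nontrivial (Fin n)] [Nontrivial (Fin p)]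
    {V : Submodule K (Matrix (Fin n) (Fin p) K)} (h : InjOnHyperplanes V)
    (ht : InjOnHyperplanes (transposeSpace V)) : Reduced K V := by
  refine ⟨fun x hx => by_contra fun hne => ?_, ?_⟩
  · obtain ⟨M, hM, hMx⟩ := h.exists_mulVec_ne_zero hne
    exact hMx (hx M hM)
  · refine span_eq_top_of_forall_exists_dotProduct_ne_zero fun v hv => ?_
    obtain ⟨M, hM, hMv⟩ := ht.exists_mulVec_ne_zero hv
    obtain ⟨j, hj⟩ := Function.ne_iff.1 hMv
    refine ⟨_, ⟨Mᵀ, hM, Pi.single j 1, rfl⟩, ?_⟩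
    rwa [dotProduct_mulVec, vecMul_transpose, dotProduct_single_one]

theorem InjOnHyperplanes.primitive {V : Submodule K (Matrix (Fin (n + 1)) (Fin (n + 1)) K)}
    (h : InjOnHyperplanes V) (ht : InjOnHyperplanes (transposeSpace V)) (hn : 0 < n)
    (hr : urk V = n) : Primitive K V := by
  have : Nontrivial (Fin (n + 1)) := Fin.nontrivial_iff_two_le.2 (Nat.succ_le_succ hn)
  refine ⟨⟨h.reduced ht, ?_⟩, ?_⟩
  · rintro ⟨T, hVT, hdrop⟩
    obtain ⟨M, hM, hrank⟩ := (h.of_matEquiv hVT).exists_rank_dropCol_eq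
    have hle := hdrop M hM
    omega
  · rintro ⟨T, hVT, hdrop⟩
    obtain ⟨M, hM, hrank⟩ := (ht.of_matEquiv hVT.transpose).exists_rank_dropCol_eq
    have hle := hdrop Mᵀ hM
    rw [rank_dropRow, transpose_transpose] at hle
    omega

lemma Reduced.exists_row_ne_zero {V : Submodule K (Matrix (Fin n) (Fin p) K)} (h : Reduced K V)
    (i : Fin n) : ∃ M ∈ V, M i ≠ 0 := by
  by_contra! hrow
  have hle : (⊤ : Submodule K (Fin n → K)) ≤ LinearMap.ker (LinearMap.proj i) := by
    rw [← h.2, Submodule.span_le]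
    rintro _ ⟨M, hM, x, rfl⟩
    exact (congrArg (· ⬝ᵥ x) (hrow M hM)).trans (zero_dotProduct x)
  simpa using hle (Submodule.mem_top (x := Pi.single i 1))

theorem SemiPrimitive.exists_diag_ne_zero {V : Submodule K (Matrix (Fin (n + 1)) (Fin (n + 1)) K)}
    (h : SemiPrimitive K V) (hr : urk V = n) (hV : ∀ M ∈ V, M.IsUpperTriangular)
    (k : Fin (n + 1)) : ∃ M ∈ V, M k k ≠ 0 := by
  obtain ⟨hred, hcol⟩ := h
  induction k using Fin.lastCases with
  | last =>
    obtain ⟨M, hM, hrow⟩ := hred.exists_row_ne_zero (Fin.last n)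
    refine ⟨M, hM, fun hlast => hrow (funext fun j => ?_)⟩
    rcases (Fin.le_last j).lt_or_eq with hj | rfl
    · exact hV M hM hj
    · exact hlast
  | cast k =>
    by_contra! hk
    refine hcol ⟨V, MatEquiv.refl V, fun M hM => ?_⟩
    rw [hr]
    exact Nat.le_sub_one_of_lt (rank_dropCol_lt_of_diag_eq_zero (hV M hM) (hk M hM))

end Primitivity

section J3

variable {M : Matrix (Fin 3) (Fin 3) (ZMod 2)}
  {V : Submodule (ZMod 2) (Matrix (Fin 3) (Fin 3) (ZMod 2))}

lemma isUpperTriangular_of_mem_J3 (hM : M ∈ J3) : M.IsUpperTriangular :=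
  fun i j hij => hM.2 i j hij

lemma diag_one_eq_of_mem_J3 (hM : M ∈ J3) : M 1 1 = M 0 0 + M 2 2 := by
  have htrace : M 0 0 + M 1 1 + M 2 2 = 0 := (trace_fin_three M).symm.trans hM.1
  rw [← sub_eq_zero, CharTwo.sub_eq_add, ← htrace]
  ring

lemma det_eq_zero_of_mem_J3 (hM : M ∈ J3) : M.det = 0 := by
  have hprod : ∀ x y : ZMod 2, x * (x + y) * y = 0 := by decide
  rw [det_of_isUpperTriangular (isUpperTriangular_of_mem_J3 hM), Fin.prod_univ_three,
    diag_one_eq_of_mem_J3 hM, hprod]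

lemma exists_diag_eq_of_forall_exists_diag_ne_zero (hV : V ≤ J3)
    (h : ∀ k, ∃ M ∈ V, M k k ≠ 0) (a b : ZMod 2) :
    ∃ M ∈ V, M 0 0 = a ∧ M 1 1 = a + b ∧ M 2 2 = b := by
  let corners : Matrix (Fin 3) (Fin 3) (ZMod 2) →ₗ[ZMod 2] Fin 2 → ZMod 2 :=
    LinearMap.pi ![entryLinearMap _ _ 0 0, entryLinearMap _ _ 2 2]
  have hcorners : ∀ M, corners M = ![M 0 0, M 2 2] := fun M =>
    funext (Fin.forall_fin_two.2 ⟨rfl, rfl⟩)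
  have htop : Submodule.span (ZMod 2) (V.map corners : Set (Fin 2 → ZMod 2)) = ⊤ := by
    refine span_eq_top_of_forall_exists_dotProduct_ne_zero fun v hv => ?_
    have hline : v = ![1, 0] ∨ v = ![1, 1] ∨ v = ![0, 1] := by revert v; decide
    rcases hline with rfl | rfl | rfl
    · obtain ⟨M, hM, hM0⟩ := h 0
      exact ⟨_, ⟨M, hM, hcorners M⟩, by simpa using hM0⟩
    · obtain ⟨M, hM, hM1⟩ := h 1
      rw [diag_one_eq_of_mem_J3 (hV hM)] at hM1
      exact ⟨_, ⟨M, hM, hcorners M⟩, by simpa using hM1⟩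
    · obtain ⟨M, hM, hM2⟩ := h 2
      exact ⟨_, ⟨M, hM, hcorners M⟩, by simpa using hM2⟩
  rw [Submodule.span_eq] at htop
  obtain ⟨M, hM, hMab⟩ : ![a, b] ∈ V.map corners := htop ▸ Submodule.mem_top
  have ha : M 0 0 = a := congrFun hMab 0
  have hb : M 2 2 = b := congrFun hMab 1
  exact ⟨M, hM, ha, by rw [diag_one_eq_of_mem_J3 (hV hM), ha, hb], hb⟩

lemma exists_forall_ne_diag_ne_zero_of_forall_exists_diag_eq
    (h : ∀ a b : ZMod 2, ∃ M ∈ V, M 0 0 = a ∧ M 1 1 = a + b ∧ M 2 2 = b) (k : Fin 3) :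
    ∃ M ∈ V, ∀ i ≠ k, M i i ≠ 0 := by
  have hab : ∃ a b : ZMod 2, ∀ i ≠ k, ![a, a + b, b] i ≠ 0 := by revert k; decide
  obtain ⟨a, b, hne⟩ := hab
  obtain ⟨M, hM, h0, h1, h2⟩ := h a b
  have hdiag : ∀ i, M i i = ![a, a + b, b] i :=
    Fin.forall_fin_succ.2 ⟨h0, Fin.forall_fin_two.2 ⟨h1, h2⟩⟩
  exact ⟨M, hM, fun i hi => hdiag i ▸ hne i hi⟩

end J3

theorem subspace_of_J3_primitive_iff
    (V : Submodule (ZMod 2) (Matrix (Fin 3) (Fin 3) (ZMod 2))) (hV : V ≤ J3) :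
    (Primitive (ZMod 2) V ∧ urk V = 2) ↔
      ∀ a b : ZMod 2, ∃ M ∈ V, M 0 0 = a ∧ M 1 1 = a + b ∧ M 2 2 = b := by
  have hupper : ∀ M ∈ V, M.IsUpperTriangular := fun M hM => isUpperTriangular_of_mem_J3 (hV hM)
  constructor
  · rintro ⟨⟨h, -⟩, hr⟩
    exact exists_diag_eq_of_forall_exists_diag_ne_zero hV (h.exists_diag_ne_zero hr hupper)
  · intro h
    have hdiag := exists_forall_ne_diag_ne_zero_of_forall_exists_diag_eq h
    have hcol : InjOnHyperplanes V :=
      injOnHyperplanes_of_blockTriangular Function.injective_id hupper hdiag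
    have hrow : InjOnHyperplanes (transposeSpace V) :=
      injOnHyperplanes_of_blockTriangular OrderDual.toDual.injective
        (fun M hM => (hupper Mᵀ hM).transpose) fun k =>
          let ⟨M, hM, hMk⟩ := hdiag k
          ⟨Mᵀ, hM, hMk⟩
    have hr : urk V = 2 := hcol.urk_eq fun M hM => det_eq_zero_of_mem_J3 (hV hM)
    exact ⟨hcol.primitive hrow two_pos hr, hr⟩
end

section
/- Let K be a field, and n ≥ 2, p ≥ 2. For every reduced linear subspace V of R(1,1) ⊂ (n×p matrices over K), there is a unique integer r with 0 ≤ r ≤ min(n−1, p−1) such that V is equivalent to one and only one of the following two spaces: the space of all matrices of the block form [[a, X^T, L], [X, 0, 0], [C, 0, 0]] with a ∈ K, X ∈ K^r, C ∈ K^{n−r−1}, L a 1×(p−r−1) row over K (the zero blocks having sizes r×r, r×(p−r−1), (n−r−1)×r, (n−r−1)×(p−r−1)); and the space of all such matrices with a = 0. -/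
/-!
A matrix of `R(1,1)` is determined by its corner entry `a`, the rest `L` of its first row and the
rest `C` of its first column. Reducedness of `V` says that `L` and `C` each take all values on `V`,
so the set `S` of the pairs `(L, C)` projects onto both of its factors; hence it is the fibre
product of two surjections onto the quotient by `S`. If `r` is the dimension of that quotient,
column and row operations turn both surjections into the truncation to the first `r` coordinates.
If `V` contains the matrix with `a = 1`, `L = 0`, `C = 0`, then `a` is arbitrary and `V` becomes
the full block space. Otherwise `a` is a linear function of `(L, C)`, which row and column
operations clear.

For uniqueness, the dimension of `V` and that of the span of its matrices of rank at most one are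
invariant under equivalence. In a normal form the `2 × 2` minors on the rows and columns `0, j`
with `1 ≤ j ≤ r` show that a matrix of rank at most one has `X = 0`, and every matrix with `X = 0`
is a sum of two matrices of rank at most one, so this span has codimension `r`. Once `r` is known,
the dimension separates the two normal forms.
-/

open Matrix

/-- `R(s, t)`: the space of `n × p` matrices whose `(i, j)` entry vanishes whenever `i ≥ s`
and `j ≥ t` (rows and columns being indexed from `0`). -/
def Rst (K : Type*) [Field K] (n p s t : ℕ) : Submodule K (Matrix (Fin n) (Fin p) K) where
  carrier := {M | ∀ (i : Fin n) (j : Fin p), s ≤ (i : ℕ) → t ≤ (j : ℕ) → M i j = 0}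
  add_mem' := by
    intro M N hM hN i j hi hj
    simp [Matrix.add_apply, hM i j hi hj, hN i j hi hj]
  zero_mem' := fun i j _ _ => rfl
  smul_mem' := by
    intro c M hM i j hi hj
    simp [Matrix.smul_apply, hM i j hi hj]

/-- The space of `n × p` matrices of the block form `[[a, Xᵀ, L], [X, 0, 0], [C, 0, 0]]`,
where `a` is a scalar, `X ∈ K^r` occupies rows `1, …, r` of column `0` and columns
`1, …, r` of row `0`, and `L`, `C` are arbitrary. -/
def BlockSpace (K : Type*) [Field K] (n p r : ℕ) (hn : 0 < n) (hp : 0 < p) :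
    Submodule K (Matrix (Fin n) (Fin p) K) where
  carrier := {M |
    (∀ (i : Fin n) (j : Fin p), 1 ≤ (i : ℕ) → 1 ≤ (j : ℕ) → M i j = 0) ∧
    ∀ (i : Fin n) (j : Fin p), (i : ℕ) = (j : ℕ) → 1 ≤ (i : ℕ) → (i : ℕ) ≤ r →
      M i ⟨0, hp⟩ = M ⟨0, hn⟩ j}
  add_mem' := by
    rintro M N ⟨hM1, hM2⟩ ⟨hN1, hN2⟩
    refine ⟨fun i j hi hj => by simp [Matrix.add_apply, hM1 i j hi hj, hN1 i j hi hj],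
      fun i j hij hi hir => by simp [Matrix.add_apply, hM2 i j hij hi hir, hN2 i j hij hi hir]⟩
  zero_mem' := ⟨fun i j _ _ => rfl, fun i j _ _ _ => rfl⟩
  smul_mem' := by
    rintro c M ⟨hM1, hM2⟩
    refine ⟨fun i j hi hj => by simp [Matrix.smul_apply, hM1 i j hi hj],
      fun i j hij hi hir => by simp [Matrix.smul_apply, hM2 i j hij hi hir]⟩

/-- As `BlockSpace`, with the extra requirement that the `(0,0)` entry vanishes. -/
def BlockSpace0 (K : Type*) [Field K] (n p r : ℕ) (hn : 0 < n) (hp : 0 < p) :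
    Submodule K (Matrix (Fin n) (Fin p) K) where
  carrier := {M | M ∈ BlockSpace K n p r hn hp ∧ M ⟨0, hn⟩ ⟨0, hp⟩ = 0}
  add_mem' := by
    rintro M N ⟨hM1, hM2⟩ ⟨hN1, hN2⟩
    exact ⟨(BlockSpace K n p r hn hp).add_mem hM1 hN1, by simp [Matrix.add_apply, hM2, hN2]⟩
  zero_mem' := ⟨(BlockSpace K n p r hn hp).zero_mem, rfl⟩
  smul_mem' := by
    rintro c M ⟨hM1, hM2⟩
    exact ⟨(BlockSpace K n p r hn hp).smul_mem c hM1, by simp [Matrix.smul_apply, hM2]⟩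

/-! ### Linear algebra -/

section LinearAlgebra

lemma exists_surjective_forall_mem_iff_apply_eq {R M N : Type*} [Ring R] [AddCommGroup M]
    [AddCommGroup N] [Module R M] [Module R N] (S : Submodule R (M × N))
    (hfst : ∀ x, ∃ y, (x, y) ∈ S) (hsnd : ∀ y, ∃ x, (x, y) ∈ S) :
    ∃ (f : M →ₗ[R] (M × N) ⧸ S) (g : N →ₗ[R] (M × N) ⧸ S),
      Function.Surjective f ∧ Function.Surjective g ∧ ∀ x y, (x, y) ∈ S ↔ f x = g y := by
  refine ⟨S.mkQ ∘ₗ LinearMap.inl R M N, S.mkQ ∘ₗ LinearMap.inr R M N ∘ₗ (-LinearMap.id),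
    fun q => ?_, fun q => ?_, fun x y => ?_⟩
  · obtain ⟨⟨x, y⟩, rfl⟩ := S.mkQ_surjective q
    obtain ⟨x', hx'⟩ := hsnd y
    refine ⟨x - x', (Submodule.Quotient.eq S).2 ?_⟩
    simpa using S.neg_mem hx'
  · obtain ⟨⟨x, y⟩, rfl⟩ := S.mkQ_surjective q
    obtain ⟨y', hy'⟩ := hfst x
    refine ⟨y' - y, (Submodule.Quotient.eq S).2 ?_⟩
    simpa using S.neg_mem hy'
  · refine Iff.trans ?_ (Submodule.Quotient.eq S).symm
    simp

variable {K E E' F : Type*} [DivisionRing K] [AddCommGroup E] [Module K E] [AddCommGroup E']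
  [Module K E'] [AddCommGroup F] [Module K F]

lemma exists_linearEquiv_prod_ker_of_surjective (f : E →ₗ[K] F) (hf : Function.Surjective f) :
    ∃ e : E ≃ₗ[K] F × f.ker, ∀ x, (e x).1 = f x := by
  obtain ⟨C, hC⟩ := Submodule.exists_isCompl f.ker
  exact ⟨LinearMap.equivProdOfSurjectiveOfIsCompl f (f.ker.projectionOnto C hC)
    (LinearMap.range_eq_top.2 hf) (Submodule.range_projectionOnto hC) (by simpa using hC),
    fun _ => rfl⟩

lemma exists_linearEquiv_comp_eq_of_surjective [FiniteDimensional K E] [FiniteDimensional K E']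
    (h : Module.finrank K E = Module.finrank K E') (f : E →ₗ[K] F) (g : E' →ₗ[K] F)
    (hf : Function.Surjective f) (hg : Function.Surjective g) :
    ∃ e : E ≃ₗ[K] E', ∀ x, g (e x) = f x := by
  obtain ⟨ef, hef⟩ := exists_linearEquiv_prod_ker_of_surjective f hf
  obtain ⟨eg, heg⟩ := exists_linearEquiv_prod_ker_of_surjective g hg
  have hker : Module.finrank K f.ker = Module.finrank K g.ker := by
    have hf' := f.finrank_range_add_finrank_ker
    have hg' := g.finrank_range_add_finrank_ker
    rw [LinearMap.range_eq_top.2 hf] at hf'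
    rw [LinearMap.range_eq_top.2 hg] at hg'
    omega
  let k : f.ker ≃ₗ[K] g.ker := LinearEquiv.ofFinrankEq _ _ hker
  refine ⟨ef ≪≫ₗ (LinearEquiv.refl K F).prodCongr k ≪≫ₗ eg.symm, fun x => ?_⟩
  rw [← heg]
  simp [hef]

lemma exists_linearEquiv_truncation_eq {r p : ℕ} [FiniteDimensional K F]
    (f : (Fin p → K) →ₗ[K] F) (hf : Function.Surjective f) (q : F ≃ₗ[K] (Fin r → K))
    (hr : r ≤ p) :
    ∃ e : (Fin p → K) ≃ₗ[K] (Fin p → K), ∀ x, e x ∘ Fin.castLE hr = q (f x) :=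
  exists_linearEquiv_comp_eq_of_surjective rfl (q.toLinearMap ∘ₗ f)
    (LinearMap.funLeft K K (Fin.castLE hr)) (q.surjective.comp hf)
    (LinearMap.funLeft_surjective_of_injective _ _ _ (Fin.castLE_injective hr))

lemma exists_linearEquiv_mem_iff_truncation_eq {n p : ℕ}
    (S : Submodule K ((Fin p → K) × (Fin n → K)))
    (hfst : ∀ L, ∃ C, (L, C) ∈ S) (hsnd : ∀ C, ∃ L, (L, C) ∈ S) :
    ∃ (r : ℕ) (hrp : r ≤ p) (hrn : r ≤ n) (A : (Fin p → K) ≃ₗ[K] (Fin p → K))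
      (B : (Fin n → K) ≃ₗ[K] (Fin n → K)),
      ∀ L C, (L, C) ∈ S ↔ A L ∘ Fin.castLE hrp = B C ∘ Fin.castLE hrn := by
  obtain ⟨f, g, hf, hg, hS⟩ := exists_surjective_forall_mem_iff_apply_eq S hfst hsnd
  have q := (Module.finBasis K (((Fin p → K) × (Fin n → K)) ⧸ S)).equivFun
  have hrp := LinearMap.finrank_le_finrank_of_surjective hf
  have hrn := LinearMap.finrank_le_finrank_of_surjective hg
  rw [Module.finrank_fin_fun] at hrp hrn
  obtain ⟨A, hA⟩ := exists_linearEquiv_truncation_eq f hf q hrp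
  obtain ⟨B, hB⟩ := exists_linearEquiv_truncation_eq g hg q hrn
  exact ⟨_, hrp, hrn, A, B, fun L C => by rw [hS, hA, hB, q.injective.eq_iff]⟩

lemma mem_iff_or_exists_mem_iff_eq_apply (U : Submodule K (K × E)) :
    (∀ a x, (a, x) ∈ U ↔ x ∈ U.map (LinearMap.snd K K E)) ∨
      ∃ θ : E →ₗ[K] K, ∀ a x, (a, x) ∈ U ↔ x ∈ U.map (LinearMap.snd K K E) ∧ a = θ x := by
  by_cases h10 : ((1, 0) : K × E) ∈ U
  · refine Or.inl fun a x => ⟨fun h => ⟨_, h, rfl⟩, ?_⟩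
    rintro ⟨⟨b, x⟩, hx, rfl⟩
    simpa using U.add_mem hx (U.smul_mem (a - b) h10)
  · right
    have hker : (LinearMap.snd K K E ∘ₗ U.subtype).ker = ⊥ := by
      refine LinearMap.ker_eq_bot'.2 ?_
      rintro ⟨⟨a, x⟩, hx⟩ (rfl : x = 0)
      have ha : a = 0 := by
        by_contra ha
        exact h10 (by simpa [ha] using U.smul_mem a⁻¹ hx)
      simp [ha]
    obtain ⟨g, hg⟩ := LinearMap.exists_leftInverse_of_injective _ hker
    have hθ : ∀ a x, (a, x) ∈ U → (g x).1.1 = a := fun a x h =>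
      congrArg (fun u : U => u.1.1) (LinearMap.congr_fun hg ⟨(a, x), h⟩)
    refine ⟨LinearMap.fst K K E ∘ₗ U.subtype ∘ₗ g, fun a x => ⟨fun h => ⟨⟨_, h, rfl⟩, ?_⟩, ?_⟩⟩
    · exact (hθ a x h).symm
    · rintro ⟨⟨⟨b, x⟩, hx, rfl⟩, rfl⟩
      simpa [hθ b x hx] using hx

end LinearAlgebra

/-! ### Invariants under equivalence -/

section RankOne

variable {K : Type*} [Field K]

/-- The span of the matrices of rank at most one lying in `V`, whose codimension in `V` is the
invariant that recovers `r`. -/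
def rankOneSpan {m n : Type*} [Fintype n] (V : Submodule K (Matrix m n K)) :
    Submodule K (Matrix m n K) :=
  Submodule.span K {M | M ∈ V ∧ M.rank ≤ 1}

lemma rankOneSpan_map {m n m' n' : Type*} [Fintype n] [Fintype n']
    (e : Matrix m n K →ₗ[K] Matrix m' n' K) (he : ∀ M, (e M).rank = M.rank)
    (V : Submodule K (Matrix m n K)) : rankOneSpan (V.map e) = (rankOneSpan V).map e := by
  rw [rankOneSpan, rankOneSpan, Submodule.map_span]
  congr 1
  ext N
  constructor
  · rintro ⟨⟨M, hM, rfl⟩, hN⟩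
    exact ⟨M, ⟨hM, he M ▸ hN⟩, rfl⟩
  · rintro ⟨M, ⟨hM, hM1⟩, rfl⟩
    exact ⟨⟨M, hM, rfl⟩, (he M).trans_le hM1⟩

lemma exists_eq_vecMulVec_of_rank_le_one {m n : Type*} [Finite m] [Fintype n] {M : Matrix m n K}
    (hM : M.rank ≤ 1) : ∃ u v, M = vecMulVec u v := by
  classical
  obtain ⟨⟨u, _⟩, hu⟩ := finrank_le_one_iff.1 hM
  choose v hv using fun j => hu ⟨M.col j, Pi.single j 1, by simp⟩
  refine ⟨u, v, Matrix.ext fun i j => ?_⟩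
  have hcol : v j • u = M.col j := congrArg Subtype.val (hv j)
  rw [vecMulVec_apply, mul_comm]
  exact (congrFun hcol i).symm

variable {n p : ℕ} {V W : Submodule K (Matrix (Fin n) (Fin p) K)}

lemma MatEquiv.exists_linearEquiv (h : MatEquiv K V W) :
    ∃ e : Matrix (Fin n) (Fin p) K ≃ₗ[K] Matrix (Fin n) (Fin p) K,
      (∀ M, (e M).rank = M.rank) ∧ W = V.map e.toLinearMap := by
  obtain ⟨P, Q, hP, hQ, h⟩ := h
  rw [isUnit_iff_isUnit_det] at hP hQ
  have hrank : ∀ M : Matrix (Fin n) (Fin p) K, (P * M * Q).rank = M.rank := fun M => by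
    rw [rank_mul_eq_left_of_isUnit_det Q _ hQ, rank_mul_eq_right_of_isUnit_det P _ hP]
  let f := mulRightLinearMap (Fin n) K Q ∘ₗ mulLeftLinearMap (Fin p) K P
  have hf : Function.Injective f := by
    refine LinearMap.ker_eq_bot.1 (LinearMap.ker_eq_bot'.2 fun M hM => ?_)
    have hPMQ : P * M * Q = 0 := hM
    rw [← nonsing_inv_mul_cancel_left P M hP, ← mul_nonsing_inv_cancel_right Q (P * M) hQ, hPMQ,
      Matrix.zero_mul, Matrix.mul_zero]
  exact ⟨LinearEquiv.ofInjectiveEndo f hf, hrank, SetLike.coe_injective h⟩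

lemma MatEquiv.finrank_eq (h : MatEquiv K V W) : Module.finrank K V = Module.finrank K W := by
  obtain ⟨e, -, rfl⟩ := h.exists_linearEquiv
  exact (e.submoduleMap V).finrank_eq

lemma MatEquiv.finrank_rankOneSpan_eq (h : MatEquiv K V W) :
    Module.finrank K (rankOneSpan V) = Module.finrank K (rankOneSpan W) := by
  obtain ⟨e, he, rfl⟩ := h.exists_linearEquiv
  rw [rankOneSpan_map e.toLinearMap he]
  exact (e.submoduleMap _).finrank_eq

end RankOne

/-! ### Matrices supported on the first row and column -/

section CrossMatrix

variable {R : Type*} [Semiring R] {n p r : ℕ}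

/-- The matrix `[[a, L], [C, 0]]` of `R(1,1)`, as a linear function of the triple `(a, L, C)`. -/
def crossMatrix : R × (Fin p → R) × (Fin n → R) →ₗ[R] Matrix (Fin (n + 1)) (Fin (p + 1)) R where
  toFun x := Matrix.of (Fin.cons (Fin.cons x.1 x.2.1) fun i => Fin.cons (x.2.2 i) 0)
  map_add' x y := by
    ext i j
    cases i using Fin.cases <;> cases j using Fin.cases <;> simp
  map_smul' c x := by
    ext i j
    cases i using Fin.cases <;> cases j using Fin.cases <;> simp

@[simp]
lemma crossMatrix_zero_zero (x : R × (Fin p → R) × (Fin n → R)) : crossMatrix x 0 0 = x.1 := rfl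

@[simp]
lemma crossMatrix_zero_succ (x : R × (Fin p → R) × (Fin n → R)) (j : Fin p) :
    crossMatrix x 0 j.succ = x.2.1 j := rfl

@[simp]
lemma crossMatrix_succ_zero (x : R × (Fin p → R) × (Fin n → R)) (i : Fin n) :
    crossMatrix x i.succ 0 = x.2.2 i := rfl

@[simp]
lemma crossMatrix_succ_succ (x : R × (Fin p → R) × (Fin n → R)) (i : Fin n) (j : Fin p) :
    crossMatrix x i.succ j.succ = 0 := rfl

variable {K : Type*} [Field K]

lemma crossMatrix_mem_Rst (x : K × (Fin p → K) × (Fin n → K)) :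
    crossMatrix x ∈ Rst K (n + 1) (p + 1) 1 1 := by
  intro i j hi hj
  obtain ⟨i, rfl⟩ := Fin.exists_succ_eq.2 (Fin.pos_iff_ne_zero.1 hi)
  obtain ⟨j, rfl⟩ := Fin.exists_succ_eq.2 (Fin.pos_iff_ne_zero.1 hj)
  rfl

lemma exists_eq_crossMatrix_of_mem_Rst {M : Matrix (Fin (n + 1)) (Fin (p + 1)) K}
    (hM : M ∈ Rst K (n + 1) (p + 1) 1 1) : ∃ a L C, M = crossMatrix (a, L, C) := by
  refine ⟨M 0 0, fun j => M 0 j.succ, fun i => M i.succ 0, ?_⟩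
  ext i j
  cases i using Fin.cases <;> cases j using Fin.cases
  exacts [rfl, rfl, rfl, hM _ _ (by simp) (by simp)]

lemma BlockSpace_le_Rst (hn : 0 < n) (hp : 0 < p) : BlockSpace K n p r hn hp ≤ Rst K n p 1 1 :=
  fun _ hM => hM.1

lemma BlockSpace0_le_BlockSpace (hn : 0 < n) (hp : 0 < p) :
    BlockSpace0 K n p r hn hp ≤ BlockSpace K n p r hn hp :=
  fun _ hM => hM.1

lemma crossMatrix_mem_BlockSpace_iff (hrp : r ≤ p) (hrn : r ≤ n) {a : K} {L : Fin p → K}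
    {C : Fin n → K} :
    crossMatrix (a, L, C) ∈ BlockSpace K (n + 1) (p + 1) r n.succ_pos p.succ_pos ↔
      L ∘ Fin.castLE hrp = C ∘ Fin.castLE hrn := by
  constructor
  · refine fun h => funext fun k => Eq.symm ?_
    exact h.2 (Fin.castLE hrn k).succ (Fin.castLE hrp k).succ (by simp) (by simp) (by simp)
  · refine fun h => ⟨crossMatrix_mem_Rst _, fun i j hij hi hir => ?_⟩
    obtain ⟨i, rfl⟩ := Fin.exists_succ_eq.2 (Fin.pos_iff_ne_zero.1 hi)
    obtain ⟨j, rfl⟩ := Fin.exists_succ_eq.2 (Fin.pos_iff_ne_zero.1 (hi.trans_eq hij))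
    have hj : j = Fin.castLE hrp ⟨i, hir⟩ := Fin.ext (Nat.succ_injective hij).symm
    rw [hj]
    exact (congrFun h ⟨i, hir⟩).symm

lemma crossMatrix_mem_BlockSpace0_iff (hrp : r ≤ p) (hrn : r ≤ n) {a : K} {L : Fin p → K}
    {C : Fin n → K} :
    crossMatrix (a, L, C) ∈ BlockSpace0 K (n + 1) (p + 1) r n.succ_pos p.succ_pos ↔
      L ∘ Fin.castLE hrp = C ∘ Fin.castLE hrn ∧ a = 0 :=
  and_congr_left' (crossMatrix_mem_BlockSpace_iff hrp hrn)

end CrossMatrix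

/-! ### Uniqueness of the normal form -/

section Uniqueness

variable {K : Type*} [Field K] {n p r : ℕ}

lemma rank_crossMatrix_row_le_one (a : K) (L : Fin p → K) :
    (crossMatrix (a, L, (0 : Fin n → K))).rank ≤ 1 := by
  have h : crossMatrix (a, L, (0 : Fin n → K)) =
      vecMulVec (Fin.cons 1 0 : Fin (n + 1) → K) (Fin.cons a L : Fin (p + 1) → K) := by
    ext i j
    cases i using Fin.cases <;> cases j using Fin.cases <;> simp [vecMulVec_apply]
  exact h ▸ rank_vecMulVec_le _ _

lemma rank_crossMatrix_col_le_one (C : Fin n → K) :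
    (crossMatrix (0, (0 : Fin p → K), C)).rank ≤ 1 := by
  have h : crossMatrix (0, (0 : Fin p → K), C) =
      vecMulVec (Fin.cons 0 C : Fin (n + 1) → K) (Fin.cons 1 0 : Fin (p + 1) → K) := by
    ext i j
    cases i using Fin.cases <;> cases j using Fin.cases <;> simp [vecMulVec_apply]
  exact h ▸ rank_vecMulVec_le _ _

/-- The vector `X` of a matrix `[[a, Xᵀ, L], [X, 0, 0], [C, 0, 0]]`, read off its first row. -/
def linkedPart (K : Type*) [Field K] (n : ℕ) (hrp : r ≤ p) :
    Matrix (Fin (n + 1)) (Fin (p + 1)) K →ₗ[K] (Fin r → K) :=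
  LinearMap.pi fun j => entryLinearMap K K 0 (Fin.castLE hrp j).succ

lemma linkedPart_eq_zero_of_rank_le_one (hrp : r ≤ p) (hrn : r ≤ n)
    {M : Matrix (Fin (n + 1)) (Fin (p + 1)) K}
    (hM : M ∈ BlockSpace K (n + 1) (p + 1) r n.succ_pos p.succ_pos) (hrank : M.rank ≤ 1) :
    linkedPart K n hrp M = 0 := by
  obtain ⟨u, v, rfl⟩ := exists_eq_vecMulVec_of_rank_le_one hrank
  funext k
  let i := (Fin.castLE hrn k).succ
  let j := (Fin.castLE hrp k).succ
  have hij : u i * v j = 0 := hM.1 i j (by simp [i]) (by simp [j])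
  have hlink : u i * v 0 = u 0 * v j := hM.2 i j rfl (by simp [i]) (by simp [i])
  -- the `2 × 2` minor on the rows `0, i` and the columns `0, j` is minus the square of the entry
  have hsq : (u 0 * v j) ^ 2 = 0 := by
    linear_combination u 0 * v 0 * hij - u 0 * v j * hlink
  exact pow_eq_zero_iff two_ne_zero |>.1 hsq

variable {W : Submodule K (Matrix (Fin (n + 1)) (Fin (p + 1)) K)}

lemma rankOneSpan_eq_inf_ker_linkedPart (hrp : r ≤ p) (hrn : r ≤ n)
    (hW0 : BlockSpace0 K (n + 1) (p + 1) r n.succ_pos p.succ_pos ≤ W)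
    (hW : W ≤ BlockSpace K (n + 1) (p + 1) r n.succ_pos p.succ_pos) :
    rankOneSpan W = W ⊓ (linkedPart K n hrp).ker := by
  apply le_antisymm
  · refine Submodule.span_le.2 fun M hM => ⟨hM.1, ?_⟩
    exact linkedPart_eq_zero_of_rank_le_one hrp hrn (hW hM.1) hM.2
  · rintro M ⟨hM, hX⟩
    obtain ⟨a, L, C, rfl⟩ := exists_eq_crossMatrix_of_mem_Rst (BlockSpace_le_Rst _ _ (hW hM))
    have hL : L ∘ Fin.castLE hrp = 0 := hX
    have hC : C ∘ Fin.castLE hrn = 0 :=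
      ((crossMatrix_mem_BlockSpace_iff hrp hrn).1 (hW hM)).symm.trans hL
    have hsum : crossMatrix (a, L, C) = crossMatrix (a, L, 0) + crossMatrix (0, 0, C) := by
      simp [← map_add]
    have hcol : crossMatrix (0, 0, C) ∈ W :=
      hW0 ((crossMatrix_mem_BlockSpace0_iff hrp hrn).2 ⟨hC.symm, rfl⟩)
    have hrow : crossMatrix (a, L, 0) ∈ W := by
      rw [eq_sub_of_add_eq hsum.symm]
      exact W.sub_mem hM hcol
    rw [hsum]
    exact add_mem (Submodule.subset_span ⟨hrow, rank_crossMatrix_row_le_one a L⟩)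
      (Submodule.subset_span ⟨hcol, rank_crossMatrix_col_le_one C⟩)

lemma linkedPart_domRestrict_surjective (hrp : r ≤ p) (hrn : r ≤ n)
    (hW0 : BlockSpace0 K (n + 1) (p + 1) r n.succ_pos p.succ_pos ≤ W) :
    Function.Surjective ((linkedPart K n hrp).domRestrict W) := by
  intro x
  obtain ⟨L, hL⟩ := LinearMap.funLeft_surjective_of_injective K K _ (Fin.castLE_injective hrp) x
  obtain ⟨C, hC⟩ := LinearMap.funLeft_surjective_of_injective K K _ (Fin.castLE_injective hrn) x
  exact ⟨⟨crossMatrix (0, L, C),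
    hW0 ((crossMatrix_mem_BlockSpace0_iff hrp hrn).2 ⟨hL.trans hC.symm, rfl⟩)⟩, hL⟩

lemma finrank_rankOneSpan_add_of_le_of_le (hrp : r ≤ p) (hrn : r ≤ n)
    (hW0 : BlockSpace0 K (n + 1) (p + 1) r n.succ_pos p.succ_pos ≤ W)
    (hW : W ≤ BlockSpace K (n + 1) (p + 1) r n.succ_pos p.succ_pos) :
    Module.finrank K (rankOneSpan W) + r = Module.finrank K W := by
  have h := ((linkedPart K n hrp).domRestrict W).finrank_range_add_finrank_ker
  rw [LinearMap.range_eq_top.2 (linkedPart_domRestrict_surjective hrp hrn hW0), finrank_top,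
    Module.finrank_fin_fun, LinearMap.ker_domRestrict, ← Submodule.finrank_map_subtype_eq,
    Submodule.map_comap_subtype, ← rankOneSpan_eq_inf_ker_linkedPart hrp hrn hW0 hW] at h
  rw [add_comm, h]

lemma finrank_rankOneSpan_add_of_matEquiv {V : Submodule K (Matrix (Fin (n + 1)) (Fin (p + 1)) K)}
    (hrp : r ≤ p) (hrn : r ≤ n)
    (h : MatEquiv K V (BlockSpace K (n + 1) (p + 1) r n.succ_pos p.succ_pos) ∨
      MatEquiv K V (BlockSpace0 K (n + 1) (p + 1) r n.succ_pos p.succ_pos)) :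
    Module.finrank K (rankOneSpan V) + r = Module.finrank K V := by
  rcases h with h | h <;> rw [h.finrank_eq, h.finrank_rankOneSpan_eq]
  · exact finrank_rankOneSpan_add_of_le_of_le hrp hrn (BlockSpace0_le_BlockSpace _ _) le_rfl
  · exact finrank_rankOneSpan_add_of_le_of_le hrp hrn le_rfl (BlockSpace0_le_BlockSpace _ _)

lemma finrank_BlockSpace0_lt (hrp : r ≤ p) (hrn : r ≤ n) :
    Module.finrank K (BlockSpace0 K (n + 1) (p + 1) r n.succ_pos p.succ_pos) <
      Module.finrank K (BlockSpace K (n + 1) (p + 1) r n.succ_pos p.succ_pos) := by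
  refine Submodule.finrank_lt_finrank_of_lt
    (SetLike.lt_iff_le_and_exists.2 ⟨BlockSpace0_le_BlockSpace _ _, crossMatrix (1, 0, 0), ?_, ?_⟩)
  · exact (crossMatrix_mem_BlockSpace_iff hrp hrn).2 rfl
  · exact fun h => one_ne_zero ((crossMatrix_mem_BlockSpace0_iff hrp hrn).1 h).2

end Uniqueness

/-! ### Existence of a normal form -/

section Existence

variable {R : Type*} [CommRing R] {n p : ℕ}

/-- The square matrix `[[1, v], [0, B]]`; such matrices and their transposes encode the row and
column operations that preserve `R(1,1)` and fix the corner matrix unit. -/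
def borderedMatrix (v : Fin n → R) (B : Matrix (Fin n) (Fin n) R) :
    Matrix (Fin (n + 1)) (Fin (n + 1)) R :=
  Matrix.of (Fin.cons (Fin.cons 1 v) fun i => Fin.cons 0 (B i))

lemma det_borderedMatrix (v : Fin n → R) (B : Matrix (Fin n) (Fin n) R) :
    (borderedMatrix v B).det = B.det := by
  have hcorner : borderedMatrix v B 0 0 = 1 := rfl
  have hcol : ∀ i : Fin n, borderedMatrix v B i.succ 0 = 0 := fun _ => rfl
  have hminor : (borderedMatrix v B).submatrix Fin.succ Fin.succ = B := rfl
  simp [det_succ_column_zero, Fin.sum_univ_succ, hcorner, hcol, hminor]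

lemma isUnit_borderedMatrix (v : Fin n → R) {B : Matrix (Fin n) (Fin n) R} (hB : IsUnit B) :
    IsUnit (borderedMatrix v B) := by
  rw [isUnit_iff_isUnit_det] at hB ⊢
  rwa [det_borderedMatrix]

lemma borderedMatrix_mul_crossMatrix_mul_transpose (u : Fin p → R) (v : Fin n → R)
    (A : Matrix (Fin p) (Fin p) R) (B : Matrix (Fin n) (Fin n) R) (a : R) (L : Fin p → R)
    (C : Fin n → R) :
    borderedMatrix v B * crossMatrix (a, L, C) * (borderedMatrix u A)ᵀ =
      crossMatrix (a + u ⬝ᵥ L + v ⬝ᵥ C, A *ᵥ L, B *ᵥ C) := by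
  ext i j
  cases i using Fin.cases <;> cases j using Fin.cases <;>
    simp [mul_apply, Fin.sum_univ_succ, borderedMatrix, dotProduct, mulVec, mul_comm]
  ring

lemma isUnit_toMatrix' (e : (Fin n → R) ≃ₗ[R] (Fin n → R)) :
    IsUnit (LinearMap.toMatrix' e.toLinearMap) :=
  ((Module.End.isUnit_iff _).2 e.bijective).map LinearMap.toMatrixAlgEquiv'

lemma exists_isUnit_mul_crossMatrix_mul (A : (Fin p → R) ≃ₗ[R] (Fin p → R))
    (B : (Fin n → R) ≃ₗ[R] (Fin n → R)) (θ : (Fin p → R) × (Fin n → R) →ₗ[R] R) :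
    ∃ (P : Matrix (Fin (n + 1)) (Fin (n + 1)) R) (Q : Matrix (Fin (p + 1)) (Fin (p + 1)) R),
      IsUnit P ∧ IsUnit Q ∧ ∀ a L C,
        P * crossMatrix (a, L, C) * Q = crossMatrix (a + θ (L, C), A L, B C) := by
  obtain ⟨u, hu⟩ := (dotProductEquiv R (Fin p)).surjective (θ ∘ₗ LinearMap.inl R _ _)
  obtain ⟨v, hv⟩ := (dotProductEquiv R (Fin n)).surjective (θ ∘ₗ LinearMap.inr R _ _)
  have hθ : ∀ L C, θ (L, C) = u ⬝ᵥ L + v ⬝ᵥ C := fun L C => by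
    have hL : u ⬝ᵥ L = θ (L, 0) := LinearMap.congr_fun hu L
    have hC : v ⬝ᵥ C = θ (0, C) := LinearMap.congr_fun hv C
    simp [hL, hC, ← map_add]
  refine ⟨borderedMatrix v (LinearMap.toMatrix' B.toLinearMap),
    (borderedMatrix u (LinearMap.toMatrix' A.toLinearMap))ᵀ,
    isUnit_borderedMatrix v (isUnit_toMatrix' B),
    (isUnit_transpose _).2 (isUnit_borderedMatrix u (isUnit_toMatrix' A)), fun a L C => ?_⟩
  rw [borderedMatrix_mul_crossMatrix_mul_transpose, hθ, add_assoc, LinearMap.toMatrix'_mulVec,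
    LinearMap.toMatrix'_mulVec]
  rfl

variable {K : Type*} [Field K] {V W : Submodule K (Matrix (Fin (n + 1)) (Fin (p + 1)) K)}

lemma matEquiv_of_crossMatrix_mem_iff (hV : V ≤ Rst K (n + 1) (p + 1) 1 1)
    (hW : W ≤ Rst K (n + 1) (p + 1) 1 1) (A : (Fin p → K) ≃ₗ[K] (Fin p → K))
    (B : (Fin n → K) ≃ₗ[K] (Fin n → K)) (θ : (Fin p → K) × (Fin n → K) →ₗ[K] K)
    (h : ∀ a L C, crossMatrix (a, L, C) ∈ V ↔ crossMatrix (a + θ (L, C), A L, B C) ∈ W) :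
    MatEquiv K V W := by
  obtain ⟨P, Q, hP, hQ, hPQ⟩ := exists_isUnit_mul_crossMatrix_mul A B θ
  refine ⟨P, Q, hP, hQ, Set.Subset.antisymm (fun N hN => ?_) ?_⟩
  · obtain ⟨a, L, C, rfl⟩ := exists_eq_crossMatrix_of_mem_Rst (hW hN)
    let M := crossMatrix (a - θ (A.symm L, B.symm C), A.symm L, B.symm C)
    have hMN : P * M * Q = crossMatrix (a, L, C) := by simp [M, hPQ]
    exact ⟨M, (h _ _ _).2 (by simpa using hN), hMN⟩
  · rintro _ ⟨M, hM, rfl⟩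
    obtain ⟨a, L, C, rfl⟩ := exists_eq_crossMatrix_of_mem_Rst (hV hM)
    change P * _ * Q ∈ W
    rw [hPQ]
    exact (h a L C).1 hM

lemma Reduced.exists_crossMatrix_row_mem (hred : Reduced K V)
    (hV : V ≤ Rst K (n + 1) (p + 1) 1 1) (L : Fin p → K) :
    ∃ a C, crossMatrix (a, L, C) ∈ V := by
  let rows := (V.comap crossMatrix).map (LinearMap.fst K (Fin p → K) (Fin n → K) ∘ₗ
    LinearMap.snd K K _)
  suffices hrows : rows = ⊤ by
    obtain ⟨⟨a, L, C⟩, h, rfl⟩ : L ∈ rows := hrows ▸ Submodule.mem_top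
    exact ⟨a, C, h⟩
  by_contra hrows
  obtain ⟨f, hf0, hf⟩ := Submodule.exists_le_ker_of_lt_top _ (lt_top_iff_ne_top.2 hrows)
  obtain ⟨w, rfl⟩ := (dotProductEquiv K (Fin p)).surjective f
  have hw : (Fin.cons 0 w : Fin (p + 1) → K) = 0 := hred.1 _ fun M hM => by
    obtain ⟨a, L, C, rfl⟩ := exists_eq_crossMatrix_of_mem_Rst (hV hM)
    have hwL : w ⬝ᵥ L = 0 := hf ⟨(a, L, C), hM, rfl⟩
    rw [dotProduct_comm, dotProduct] at hwL
    ext i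
    cases i using Fin.cases <;> simp [mulVec, dotProduct, Fin.sum_univ_succ, hwL]
  refine hf0 ((LinearEquiv.map_eq_zero_iff _).2 (funext fun j => ?_))
  exact congrFun hw j.succ

lemma Reduced.exists_crossMatrix_col_mem (hred : Reduced K V)
    (hV : V ≤ Rst K (n + 1) (p + 1) 1 1) (C : Fin n → K) :
    ∃ a L, crossMatrix (a, L, C) ∈ V := by
  let cols := (V.comap crossMatrix).map (LinearMap.snd K (Fin p → K) (Fin n → K) ∘ₗ
    LinearMap.snd K K _)
  have hspan : (⊤ : Submodule K (Fin (n + 1) → K)) ≤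
      cols.comap (LinearMap.funLeft K K Fin.succ) := by
    rw [← hred.2, Submodule.span_le]
    rintro _ ⟨M, hM, x, rfl⟩
    obtain ⟨a, L, C, rfl⟩ := exists_eq_crossMatrix_of_mem_Rst (hV hM)
    have htail : LinearMap.funLeft K K Fin.succ (crossMatrix (a, L, C) *ᵥ x) = x 0 • C := by
      ext i
      simp [mulVec, dotProduct, Fin.sum_univ_succ, LinearMap.funLeft_apply, mul_comm]
    change _ ∈ cols
    rw [htail]
    exact cols.smul_mem _ ⟨(a, L, C), hM, rfl⟩
  obtain ⟨⟨a, L, C⟩, h, rfl⟩ : C ∈ cols := by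
    simpa using! hspan (Submodule.mem_top (x := Fin.cons 0 C))
  exact ⟨a, L, h⟩

lemma exists_matEquiv_BlockSpace_or_BlockSpace0 (hV : V ≤ Rst K (n + 1) (p + 1) 1 1)
    (hred : Reduced K V) :
    ∃ r, r ≤ p ∧ r ≤ n ∧
      (MatEquiv K V (BlockSpace K (n + 1) (p + 1) r n.succ_pos p.succ_pos) ∨
        MatEquiv K V (BlockSpace0 K (n + 1) (p + 1) r n.succ_pos p.succ_pos)) := by
  let U := V.comap crossMatrix
  have hrow : ∀ L, ∃ C, (L, C) ∈ U.map (LinearMap.snd K K _) := fun L =>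
    let ⟨a, C, h⟩ := hred.exists_crossMatrix_row_mem hV L
    ⟨C, (a, L, C), h, rfl⟩
  have hcol : ∀ C, ∃ L, (L, C) ∈ U.map (LinearMap.snd K K _) := fun C =>
    let ⟨a, L, h⟩ := hred.exists_crossMatrix_col_mem hV C
    ⟨L, (a, L, C), h, rfl⟩
  obtain ⟨r, hrp, hrn, A, B, hS⟩ := exists_linearEquiv_mem_iff_truncation_eq _ hrow hcol
  refine ⟨r, hrp, hrn, ?_⟩
  have hblock := BlockSpace_le_Rst (K := K) (r := r) n.succ_pos p.succ_pos
  rcases mem_iff_or_exists_mem_iff_eq_apply U with hU | ⟨θ, hU⟩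
  · refine Or.inl (matEquiv_of_crossMatrix_mem_iff hV hblock A B 0 fun a L C => ?_)
    rw [crossMatrix_mem_BlockSpace_iff hrp hrn, ← hS, ← hU a]
    rfl
  · refine Or.inr (matEquiv_of_crossMatrix_mem_iff hV
      ((BlockSpace0_le_BlockSpace _ _).trans hblock) A B (-θ) fun a L C => ?_)
    rw [crossMatrix_mem_BlockSpace0_iff hrp hrn, ← hS, LinearMap.neg_apply, ← sub_eq_add_neg,
      sub_eq_zero, ← hU]
    rfl

end Existence

theorem classification_of_reduced_subspaces_of_R11 {K : Type*} [Field K] {n p : ℕ}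
    (hn : 2 ≤ n) (hp : 2 ≤ p) (V : Submodule K (Matrix (Fin n) (Fin p) K))
    (hV : V ≤ Rst K n p 1 1) (hred : Reduced K V) :
    ∃! r : ℕ, r ≤ min (n - 1) (p - 1) ∧
      Xor' (MatEquiv K V (BlockSpace K n p r (by omega) (by omega)))
        (MatEquiv K V (BlockSpace0 K n p r (by omega) (by omega))) := by
  obtain ⟨n, rfl⟩ := Nat.exists_eq_add_one_of_ne_zero (by omega : n ≠ 0)
  obtain ⟨p, rfl⟩ := Nat.exists_eq_add_one_of_ne_zero (by omega : p ≠ 0)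
  obtain ⟨r, hrp, hrn, hr⟩ := exists_matEquiv_BlockSpace_or_BlockSpace0 hV hred
  refine ⟨r, ⟨by omega, (xor_iff_or_and_not_and _ _).2 ⟨hr, fun ⟨h, h0⟩ => ?_⟩⟩, ?_⟩
  · exact (finrank_BlockSpace0_lt hrp hrn).ne (h0.finrank_eq.symm.trans h.finrank_eq)
  · rintro s ⟨hs, hxor⟩
    have hcodim_r := finrank_rankOneSpan_add_of_matEquiv hrp hrn hr
    have hcodim_s := finrank_rankOneSpan_add_of_matEquiv (by omega) (by omega)
      ((xor_iff_or_and_not_and _ _).1 hxor).1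
    omega
end
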